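/- Let Ω = Fin N, and let H ≤ G be subgroups of Sym(Ω), acting on assignments θ : Ω → Bool by permuting positions. Suppose S is a complete symmetry breaking set for the action of H on assignments Ω → Bool. Then the set T := {θ ∈ S | θ is lexicographically minimal among all elements of S that lie in the G-orbit of θ} is a complete symmetry breaking set for the action of G on assignments Ω → Bool. -/

import Mathlib

/-!
The lexicographic order on `Fin N → Bool` is a linear order, so the finite set of elements of `S`
in a given `G`-orbit has a unique least element as soon as it is nonempty; and it is nonempty
because `S` already meets the `H`-orbit of every assignment, which lies inside its `G`-orbit.
Uniqueness of the representative of a `G`-orbit is antisymmetry of the order.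
-/

/-- The lexicographic order on `Fin N → Bool` induced by the natural order on `Fin N`
and `false < true`. -/
def lexLE {N : ℕ} (θ θ' : Fin N → Bool) : Prop :=
  θ = θ' ∨ ∃ i : Fin N, θ i < θ' i ∧ ∀ k : Fin N, k < i → θ k = θ' k

/-- `lexLE` is the order of Mathlib's lexicographic product `Lex (Fin N → Bool)`. -/
theorem lexLE_iff_toLex_le {N : ℕ} (θ θ' : Fin N → Bool) :
    lexLE θ θ' ↔ toLex θ ≤ toLex θ' := by
  rw [le_iff_eq_or_lt, toLex_inj]
  exact or_congr Iff.rfl (exists_congr fun _ => and_comm)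

/-- From a subgroup to the full group: if `H ≤ G ≤ Sym(Fin N)` and `S`
is a complete symmetry breaking set for `H` acting on assignments `Fin N → Bool`, then
the set of elements of `S` that are lexicographically minimal among the elements of `S`
in their own `G`-orbit is a complete symmetry breaking set for `G`. -/
theorem subgroup_index_sbp (N : ℕ) (G H : Subgroup (Equiv.Perm (Fin N))) (hHG : H ≤ G)
    (S : Set (Fin N → Bool))
    (hS : ∀ θ : Fin N → Bool, ∃! θ' : Fin N → Bool,
      θ' ∈ S ∧ ∃ σ ∈ H, ∀ i : Fin N, θ' (σ i) = θ i) :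
    ∀ θ : Fin N → Bool, ∃! θ' : Fin N → Bool,
      θ' ∈ {η : Fin N → Bool | η ∈ S ∧ ∀ η' ∈ S,
        (∃ σ ∈ G, ∀ i : Fin N, η' (σ i) = η i) → lexLE η η'} ∧
      ∃ σ ∈ G, ∀ i : Fin N, θ' (σ i) = θ i := by
  intro θ
  obtain ⟨η₀, ⟨hη₀, σ₀, hσ₀, h₀⟩, -⟩ := hS θ
  obtain ⟨m, ⟨hmS, τ, hτ, hm⟩, hmin⟩ :=
    Set.exists_min_image {η : Fin N → Bool | η ∈ S ∧ ∃ σ ∈ G, ∀ i, η (σ i) = θ i} toLex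
      (Set.toFinite _) ⟨η₀, hη₀, σ₀, hHG hσ₀, h₀⟩
  refine ⟨m, ⟨⟨hmS, ?_⟩, τ, hτ, hm⟩, ?_⟩
  · rintro η' hη' ⟨σ, hσ, h⟩
    exact (lexLE_iff_toLex_le _ _).2
      (hmin η' ⟨hη', σ * τ, G.mul_mem hσ hτ, fun i => (h (τ i)).trans (hm i)⟩)
  · rintro η ⟨⟨hηS, hηmin⟩, ρ, hρ, hη⟩
    have hηm : toLex η ≤ toLex m := (lexLE_iff_toLex_le _ _).1 <|
      hηmin m hmS ⟨τ * ρ⁻¹, G.mul_mem hτ (G.inv_mem hρ), fun i => by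
        simpa using (hm (ρ⁻¹ i)).trans (hη (ρ⁻¹ i)).symm⟩
    exact toLex_inj.1 (le_antisymm hηm (hmin η ⟨hηS, ρ, hρ, hη⟩))
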